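/- Let (X, ·) be a cycle set and A an abelian group. Every extension (Y, p) of X by A is equivalent to the extension (A ×_f X, p_X) for some 2-cocycle f ∈ Z²(X, A); that is, there exist a 2-cocycle f and a cycle-set isomorphism F : A ×_f X → Y with p ∘ F = p_X and F(α • (β, x)) = α • F(β, x) for all α, β ∈ A, x ∈ X. -/

import Mathlib

/-!
Choose a set-theoretic section `s` of `p`. Each fibre of `p` is an `A`-torsor based at `s x`, so
`(α, x) ↦ α +ᵥ s x` is an equivariant bijection from `A × X` onto `Y`, and `s x · s y` differs from
`s (x · y)` by a unique `f (x, y) : A`. Transported along this bijection, the operation of `Y`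
becomes that of `A ×_f X`, and the cycle identity for `s x`, `s y`, `s z` becomes the cocycle
identity of `f`.
-/

section

open Function

variable {X Y A : Type*} {opX : X → X → X} {opY : Y → Y → Y} {p : Y → X} {s : X → Y}
  {f : X × X → A}

/-- The identity `(a·b)·(a·c) = (b·a)·(b·c)` in the definition of a cycle set, stated for an
arbitrary binary operation. -/
def CycleIdentity (op : X → X → X) : Prop :=
  ∀ a b c : X, op (op a b) (op a c) = op (op b a) (op b c)

/-- The 2-cocycle condition `f ∈ Z²(X, A)`. The order of the summands is the one that is correct
for noncommutative `A`. -/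
def IsTwoCocycle [Add A] (op : X → X → X) (f : X × X → A) : Prop :=
  ∀ x y z : X, f (x, z) + f (op x y, op x z) = f (y, z) + f (op y x, op y z)

/-- The operation of `A ×_f X`. -/
def twistedOp [Add A] (op : X → X → X) (f : X × X → A) (u v : A × X) : A × X :=
  (v.1 + f (u.2, v.2), op u.2 v.2)

/-- `A` preserves each fibre of `p` and acts simply transitively on it. -/
structure IsRegularOnFibers (A : Type*) [VAdd A Y] (p : Y → X) : Prop where
  map_vadd : ∀ (α : A) (y : Y), p (α +ᵥ y) = p y
  existsUnique_vadd_eq : ∀ y z : Y, p y = p z → ∃! α : A, α +ᵥ z = y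

/-- `p : Y → X` is an extension by `A` of sets with a binary operation; it is an extension of cycle
sets when `opX` and `opY` are cycle set operations. -/
structure IsExtension (A : Type*) [VAdd A Y] (opX : X → X → X) (opY : Y → Y → Y) (p : Y → X) :
    Prop extends IsRegularOnFibers A p where
  surjective : Surjective p
  map_op : ∀ y z : Y, p (opY y z) = opX (p y) (p z)
  vadd_op : ∀ (α : A) (y z : Y), opY (α +ᵥ y) z = opY y z
  op_vadd : ∀ (α : A) (y z : Y), opY y (α +ᵥ z) = α +ᵥ opY y z

/-- `f` is the factor set of `s`: it measures the failure of the section `s` to be a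
homomorphism. -/
def IsFactorSet [VAdd A Y] (opX : X → X → X) (opY : Y → Y → Y) (s : X → Y) (f : X × X → A) :
    Prop :=
  ∀ x y : X, opY (s x) (s y) = f (x, y) +ᵥ s (opX x y)

/-- The map `A × X → Y` that identifies `A × {x}` with the orbit of `s x`. -/
def trivialization [VAdd A Y] (s : X → Y) (u : A × X) : Y :=
  u.1 +ᵥ s u.2

namespace IsRegularOnFibers

variable [VAdd A Y]

theorem vadd_left_injective (hp : IsRegularOnFibers A p) (y : Y) :
    Injective fun α : A ↦ α +ᵥ y :=
  fun _ β h ↦ (hp.existsUnique_vadd_eq (β +ᵥ y) y (hp.map_vadd β y)).unique h rfl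

theorem map_trivialization (hp : IsRegularOnFibers A p) (hs : RightInverse s p) (u : A × X) :
    p (trivialization s u) = u.2 :=
  (hp.map_vadd u.1 (s u.2)).trans (hs u.2)

theorem trivialization_injective (hp : IsRegularOnFibers A p) (hs : RightInverse s p) :
    Injective (trivialization s : A × X → Y) := by
  rintro ⟨α, x⟩ ⟨β, y⟩ h
  obtain rfl : x = y := by
    simpa only [hp.map_trivialization hs] using congrArg p h
  exact congrArg (·, x) (hp.vadd_left_injective (s x) h)

theorem trivialization_surjective (hp : IsRegularOnFibers A p) (hs : RightInverse s p) :
    Surjective (trivialization s : A × X → Y) := fun y ↦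
  let ⟨α, hα, _⟩ := hp.existsUnique_vadd_eq y (s (p y)) (hs (p y)).symm
  ⟨(α, p y), hα⟩

theorem trivialization_bijective (hp : IsRegularOnFibers A p) (hs : RightInverse s p) :
    Bijective (trivialization s : A × X → Y) :=
  ⟨hp.trivialization_injective hs, hp.trivialization_surjective hs⟩

end IsRegularOnFibers

theorem trivialization_add [AddSemigroup A] [AddSemigroupAction A Y] (s : X → Y) (α β : A)
    (x : X) : trivialization s (α + β, x) = α +ᵥ trivialization s (β, x) :=
  add_vadd α β (s x)

namespace IsExtension

theorem exists_isFactorSet [VAdd A Y] (hp : IsExtension A opX opY p) (hs : RightInverse s p) :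
    ∃ f : X × X → A, IsFactorSet opX opY s f := by
  have same_fiber (q : X × X) : p (opY (s q.1) (s q.2)) = p (s (opX q.1 q.2)) := by
    rw [hp.map_op, hs, hs, hs]
  choose f hf using fun q ↦ (hp.existsUnique_vadd_eq _ _ (same_fiber q)).exists
  exact ⟨f, fun x y ↦ (hf (x, y)).symm⟩

variable [AddSemigroup A] [AddSemigroupAction A Y]

theorem trivialization_twistedOp (hp : IsExtension A opX opY p) (hf : IsFactorSet opX opY s f)
    (u v : A × X) :
    trivialization s (twistedOp opX f u v) = opY (trivialization s u) (trivialization s v) := by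
  simp only [trivialization, twistedOp, hp.vadd_op, hp.op_vadd, hf u.2 v.2, add_vadd]

theorem op_op_section_eq_trivialization (hp : IsExtension A opX opY p)
    (hf : IsFactorSet opX opY s f) (x y z : X) :
    opY (opY (s x) (s y)) (opY (s x) (s z)) =
      trivialization s (f (x, z) + f (opX x y, opX x z), opX (opX x y) (opX x z)) := by
  rw [hf x y, hf x z]
  exact (hp.trivialization_twistedOp hf (f (x, y), opX x y) (f (x, z), opX x z)).symm

theorem isTwoCocycle_of_isFactorSet (hp : IsExtension A opX opY p) (hY : CycleIdentity opY)
    (hs : RightInverse s p) (hf : IsFactorSet opX opY s f) : IsTwoCocycle opX f := by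
  intro x y z
  have cycle := hY (s x) (s y) (s z)
  rw [hp.op_op_section_eq_trivialization hf, hp.op_op_section_eq_trivialization hf] at cycle
  exact congrArg Prod.fst (hp.trivialization_injective hs cycle)

end IsExtension

theorem statement_14_general [AddSemigroup A] [AddSemigroupAction A Y]
    (hp : IsExtension A opX opY p) (hY : CycleIdentity opY) :
    ∃ f : X × X → A, IsTwoCocycle opX f ∧
      ∃ F : A × X → Y, Bijective F ∧
        (∀ u v : A × X, F (twistedOp opX f u v) = opY (F u) (F v)) ∧
        (∀ u : A × X, p (F u) = u.2) ∧
        (∀ (α β : A) (x : X), F (α + β, x) = α +ᵥ F (β, x)) := by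
  obtain ⟨s, hs⟩ := hp.surjective.hasRightInverse
  obtain ⟨f, hf⟩ := hp.exists_isFactorSet hs
  exact ⟨f, hp.isTwoCocycle_of_isFactorSet hY hs hf, trivialization s,
    hp.trivialization_bijective hs, hp.trivialization_twistedOp hf, hp.map_trivialization hs,
    trivialization_add s⟩

end

/-- Every extension `(Y, p)` of a cycle set `(X, ·)` by an abelian
group `A` is equivalent to the extension `(A ×_f X, p_X)` for some 2-cocycle `f`. -/
theorem statement_14 {X Y A : Type*} [AddCommGroup A]
    (opX : X → X → X)
    (hXbij : ∀ a : X, Function.Bijective (opX a))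
    (hXcyc : ∀ a b c : X, opX (opX a b) (opX a c) = opX (opX b a) (opX b c))
    (opY : Y → Y → Y)
    (hYbij : ∀ y : Y, Function.Bijective (opY y))
    (hYcyc : ∀ y z w : Y, opY (opY y z) (opY y w) = opY (opY z y) (opY z w))
    (p : Y → X) (hsurj : Function.Surjective p)
    (hhom : ∀ y z : Y, p (opY y z) = opX (p y) (p z))
    (act : A → Y → Y)
    (hact0 : ∀ y : Y, act 0 y = y)
    (hactadd : ∀ (α β : A) (y : Y), act (α + β) y = act α (act β y))
    (hreg : ∀ y z : Y, p y = p z → ∃! α : A, act α z = y)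
    (hfib : ∀ (α : A) (y : Y), p (act α y) = p y)
    (hcompat1 : ∀ (α : A) (y z : Y), opY (act α y) z = opY y z)
    (hcompat2 : ∀ (α : A) (y z : Y), opY y (act α z) = act α (opY y z)) :
    ∃ f : X × X → A,
      (∀ x y z : X,
        f (x, z) + f (opX x y, opX x z) = f (y, z) + f (opX y x, opX y z)) ∧
      ∃ F : A × X → Y, Function.Bijective F ∧
        (∀ u v : A × X,
          F (v.1 + f (u.2, v.2), opX u.2 v.2) = opY (F u) (F v)) ∧
        (∀ u : A × X, p (F u) = u.2) ∧
        (∀ (α β : A) (x : X), F (α + β, x) = act α (F (β, x))) := by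
  let _ : AddSemigroupAction A Y := { vadd := act, add_vadd := hactadd }
  exact statement_14_general ⟨⟨hfib, hreg⟩, hsurj, hhom, hcompat1, hcompat2⟩ hYcyc
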